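/- Let S be a skew lattice and x ∈ S. Then the cardinality of the principal ideal of x is at most the cardinality of the D-class of x times the cardinality of the principal skew ideal of x: |{z ∈ S : z ⪯ x}| ≤ |{z ∈ S : z D x}| · |{z ∈ S : z ≤ x}|. -/

import Mathlib

/-!
The map `z ↦ (z ∨ x ∨ z, x ∧ z ∧ x)` embeds the principal ideal of `x` into the product of the
`D`-class of `x` and the principal skew ideal of `x`. With `d = z ∨ x ∨ z` and `e = x ∧ z ∧ x`,
absorption gives `z ≤ d`, and `d D x` gives `d ∧ x ∧ d = d`, so
`d ∧ e ∧ d = (d ∧ x ∧ d) ∧ z ∧ (d ∧ x ∧ d) = d ∧ z ∧ d = z` and `z` is recovered from `(d, e)`.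
That `d D x` follows from the equivalence of the meet and join forms of `⪯`
(`SkewLattice.join_of_meet` and its dual).
-/


/-- A skew lattice: two associative, idempotent binary operations `join` (∨) and
`meet` (∧) satisfying the four absorption laws. -/
structure SkewLattice (S : Type*) where
  join : S → S → S
  meet : S → S → S
  join_assoc : ∀ x y z : S, join (join x y) z = join x (join y z)
  meet_assoc : ∀ x y z : S, meet (meet x y) z = meet x (meet y z)
  join_idem : ∀ x : S, join x x = x
  meet_idem : ∀ x : S, meet x x = x
  absorb₁ : ∀ x y : S, join (meet y x) x = x
  absorb₂ : ∀ x y : S, join x (meet x y) = x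
  absorb₃ : ∀ x y : S, meet (join y x) x = x
  absorb₄ : ∀ x y : S, meet x (join x y) = x

namespace SkewLattice

variable {S : Type*} (L : SkewLattice S)

/-- The natural preorder: `x ⪯ y` iff `x ∧ y ∧ x = x`. -/
def preceq (x y : S) : Prop := L.meet (L.meet x y) x = x

/-- The natural partial order: `x ≤ y` iff `x ∧ y = x = y ∧ x`. -/
def le (x y : S) : Prop := L.meet x y = x ∧ L.meet y x = x

/-- Strict natural partial order. -/
def lt (x y : S) : Prop := L.le x y ∧ x ≠ y

/-- Green's relation `D`: `x D y` iff `x ∧ y ∧ x = x` and `y ∧ x ∧ y = y`. -/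
def dRel (x y : S) : Prop :=
  L.meet (L.meet x y) x = x ∧ L.meet (L.meet y x) y = y

end SkewLattice

namespace SkewLattice

variable {S : Type*} (L : SkewLattice S)

/-- The skew lattice with meet and join exchanged. -/
def dual : SkewLattice S where
  join := L.meet
  meet := L.join
  join_assoc := L.meet_assoc
  meet_assoc := L.join_assoc
  join_idem := L.meet_idem
  meet_idem := L.join_idem
  absorb₁ := L.absorb₃
  absorb₂ := L.absorb₄
  absorb₃ := L.absorb₁
  absorb₄ := L.absorb₂

theorem join_of_meet {z x : S} (h : L.meet (L.meet z x) z = z) :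
    L.join (L.join x z) x = x := by
  -- With `b = x ∧ z`, the laws give `z ∨ b = b` and `x ∨ b = x`, so `x ∨ z ∨ b = x`.
  have hb : L.join z (L.meet x z) = L.meet x z := by
    have h1 := L.absorb₁ (L.meet x z) z
    rwa [← L.meet_assoc, h] at h1
  have hx : L.join x (L.join z (L.meet x z)) = x := by rw [hb, L.absorb₂]
  have hi := L.join_idem (L.join x z)
  calc L.join (L.join x z) x
      = L.join (L.join x z) (L.join (L.join x z) (L.meet x z)) := by
        rw [L.join_assoc x z (L.meet x z), hx]
    _ = x := by rw [← L.join_assoc, hi, L.join_assoc, hx]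

theorem meet_of_join {z x : S} (h : L.join (L.join z x) z = z) :
    L.meet (L.meet x z) x = x :=
  L.dual.join_of_meet h

theorem dRel_join {z x : S} (h : L.preceq z x) : L.dRel (L.join (L.join z x) z) x := by
  have hx := L.join_of_meet h
  have hi := L.join_idem (L.join z x)
  have h1 : L.join (L.join x (L.join (L.join z x) z)) x = x := by
    have : L.join (L.join x (L.join (L.join z x) z)) x
        = L.join (L.join (L.join x z) x) (L.join z x) := by simp only [L.join_assoc]
    rw [this, hx, ← L.join_assoc, hx]
  have h2 : L.join (L.join (L.join (L.join z x) z) x) (L.join (L.join z x) z)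
      = L.join (L.join z x) z := by
    have : L.join (L.join (L.join (L.join z x) z) x) (L.join (L.join z x) z)
        = L.join (L.join (L.join (L.join z x) (L.join z x)) (L.join z x)) z := by
      simp only [L.join_assoc]
    rw [this, hi, hi]
  exact ⟨L.meet_of_join h1, L.meet_of_join h2⟩

theorem le_meet (z x : S) : L.le (L.meet (L.meet x z) x) x :=
  ⟨by rw [L.meet_assoc, L.meet_idem], by rw [← L.meet_assoc, ← L.meet_assoc, L.meet_idem]⟩

/-- An element `z ⪯ x` is recovered from `d = z ∨ x ∨ z` and `e = x ∧ z ∧ x` as `d ∧ e ∧ d`. -/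
theorem recover {z x : S} (h : L.preceq z x) :
    L.meet (L.meet (L.join (L.join z x) z) (L.meet (L.meet x z) x)) (L.join (L.join z x) z)
      = z := by
  have hd := (L.dRel_join h).1
  have hl : L.meet (L.join (L.join z x) z) z = z := L.absorb₃ _ _
  have hr : L.meet z (L.join (L.join z x) z) = z := by rw [L.join_assoc, L.absorb₄]
  generalize L.join (L.join z x) z = d at hd hl hr
  calc L.meet (L.meet d (L.meet (L.meet x z) x)) d
      = L.meet (L.meet d (L.meet (L.meet x (L.meet (L.meet d z) d)) x)) d := by rw [hl, hr]
    _ = L.meet (L.meet (L.meet (L.meet d x) d) z) (L.meet (L.meet d x) d) := by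
        simp only [L.meet_assoc]
    _ = z := by rw [hd, hl, hr]

end SkewLattice

theorem stmt16 {S : Type*} (L : SkewLattice S) (x : S) :
    Cardinal.mk {z : S | L.preceq z x} ≤
      Cardinal.mk {z : S | L.dRel z x} * Cardinal.mk {z : S | L.le z x} := by
  rw [Cardinal.mul_def]
  refine Cardinal.mk_le_of_injective
    (f := fun z => (⟨_, L.dRel_join z.2⟩, ⟨_, L.le_meet z.1 x⟩)) ?_
  rintro ⟨z, hz⟩ ⟨w, hw⟩ h
  simp only [Prod.mk.injEq, Subtype.mk.injEq] at h
  have h1 := L.recover hz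
  rw [h.1, h.2, L.recover hw] at h1
  exact Subtype.ext h1.symm
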